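/- Let H be a complex Hilbert space with dim H ≥ 3 and let A ∈ B_s(H) be nonscalar with A^# = A^c. The following are equivalent: (1) the spectrum of A consists of exactly two points whose sum is nonzero; (2) every B ∈ B_s(H) with B^# = B^c and B^{##} ⊊ A^{##} is scalar. -/

import Mathlib

noncomputable section

variable {H : Type*} [NormedAddCommGroup H] [InnerProductSpace ℂ H] [CompleteSpace H]

/-- `M^c`: the set of self-adjoint operators commuting with every member of `M`. -/
def CSet (M : Set (selfAdjoint (H →L[ℂ] H))) : Set (selfAdjoint (H →L[ℂ] H)) :=
  {X | ∀ T ∈ M, (X : H →L[ℂ] H) * (T : H →L[ℂ] H) = (T : H →L[ℂ] H) * (X : H →L[ℂ] H)}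

/-- `M^#`: the set of self-adjoint operators quasi-commuting with every member of `M`. -/
def QSet (M : Set (selfAdjoint (H →L[ℂ] H))) : Set (selfAdjoint (H →L[ℂ] H)) :=
  {X | ∀ T ∈ M,
    (X : H →L[ℂ] H) * (T : H →L[ℂ] H) = (T : H →L[ℂ] H) * (X : H →L[ℂ] H) ∨
    (X : H →L[ℂ] H) * (T : H →L[ℂ] H) + (T : H →L[ℂ] H) * (X : H →L[ℂ] H) = 0}

section QuasiCommutant

open ComplexStarModule InnerProductSpace

lemma mem_CSet_singleton {X A : selfAdjoint (H →L[ℂ] H)} :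
    X ∈ CSet {A} ↔ Commute (X : H →L[ℂ] H) A :=
  ⟨fun h => h A rfl, fun h T hT => by obtain rfl : T = A := hT; exact h⟩

/-- A vector space over an infinite field is not a union of two proper subspaces; here the
subspaces are the commutant and the anticommutant. -/
lemma QSet_CSet_singleton (A : selfAdjoint (H →L[ℂ] H)) :
    QSet (CSet {A}) = CSet (CSet {A}) := by
  refine Set.Subset.antisymm (fun Y hY X hX => ?_) fun Y hY X hX => Or.inl (hY X hX)
  refine (hY X hX).elim id fun hanti => ?_
  have hX1 : X + 1 ∈ CSet {A} := by
    rw [mem_CSet_singleton] at hX ⊢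
    simpa using hX.add_left (Commute.one_left _)
  rcases hY _ hX1 with h | h
  · simpa [mul_add, add_mul] using h
  · have h2 : (2 : ℂ) • (Y : H →L[ℂ] H) = 0 := by
      have h3 : (Y : H →L[ℂ] H) * X + X * Y + (2 : ℂ) • (Y : H →L[ℂ] H) = 0 := by
        rw [← h]
        simp only [AddSubgroup.coe_add, selfAdjoint.val_one, mul_add, add_mul, mul_one, one_mul,
          two_smul]
        abel
      rwa [hanti, zero_add] at h3
    have hY0 : (Y : H →L[ℂ] H) = 0 := (smul_eq_zero.1 h2).resolve_left two_ne_zero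
    simp [hY0]

lemma QSet_QSet_of_QSet_eq_CSet {A : selfAdjoint (H →L[ℂ] H)} (h : QSet {A} = CSet {A}) :
    QSet (QSet {A}) = CSet (CSet {A}) := by
  rw [h, QSet_CSet_singleton]

lemma commute_of_mem_CSet_CSet {A B : selfAdjoint (H →L[ℂ] H)} (hB : B ∈ CSet (CSet {A}))
    {T : H →L[ℂ] H} (hT : Commute T A) : Commute (B : H →L[ℂ] H) T := by
  have hT' : Commute (star T) (A : H →L[ℂ] H) := by
    have h := hT.star_star
    rwa [A.2.star_eq] at h
  have hre : Commute (B : H →L[ℂ] H) (ℜ T : H →L[ℂ] H) := hB _ <| mem_CSet_singleton.2 <| by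
    rw [realPart_apply_coe]
    exact (hT.add_left hT').smul_left _
  have him : Commute (B : H →L[ℂ] H) (ℑ T : H →L[ℂ] H) := hB _ <| mem_CSet_singleton.2 <| by
    rw [imaginaryPart_apply_coe]
    exact ((hT.sub_left hT').smul_left _).smul_left _
  rw [← realPart_add_I_smul_imaginaryPart T]
  exact hre.add_right (him.smul_right _)

omit [CompleteSpace H] in
lemma mul_rankOne (A : H →L[ℂ] H) (u v : H) :
    A * rankOne ℂ u v = rankOne ℂ (A u) v :=
  comp_rankOne u v A

lemma rankOne_mul_selfAdjoint {A : H →L[ℂ] H} (hA : IsSelfAdjoint A) (u v : H) :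
    rankOne ℂ u v * A = rankOne ℂ u (A v) := by
  have h := rankOne_comp u v A
  rwa [hA.adjoint_eq] at h

omit [CompleteSpace H] in
lemma rankOne_ofReal_smul_right (a : ℝ) (u v : H) :
    rankOne ℂ u ((a : ℂ) • v) = (a : ℂ) • rankOne ℂ u v := by
  rw [map_smulₛₗ, Complex.conj_ofReal]

/-- The bicommutant of a self-adjoint operator acts by scalars on each eigenspace. -/
lemma exists_smul_of_mem_CSet_CSet {A B : selfAdjoint (H →L[ℂ] H)} (hB : B ∈ CSet (CSet {A}))
    (a : ℝ) : ∃ c : ℂ, ∀ u, (A : H →L[ℂ] H) u = (a : ℂ) • u → (B : H →L[ℂ] H) u = c • u := by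
  by_cases h : ∃ w : H, w ≠ 0 ∧ (A : H →L[ℂ] H) w = (a : ℂ) • w
  · obtain ⟨w, hw0, hw⟩ := h
    have hww : inner ℂ w w ≠ 0 := inner_self_ne_zero.2 hw0
    refine ⟨(inner ℂ w w)⁻¹ * inner ℂ w ((B : H →L[ℂ] H) w), fun u hu => ?_⟩
    have hT : Commute (rankOne ℂ u w) (A : H →L[ℂ] H) := by
      rw [commute_iff_eq, rankOne_mul_selfAdjoint A.2, mul_rankOne, hu, hw,
        rankOne_ofReal_smul_right, map_smul, smul_apply]
    have h := congr($((commute_of_mem_CSet_CSet hB hT).eq) w)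
    simp only [mul_apply_eq_comp, rankOne_apply, map_smul] at h
    rw [mul_smul, ← h, inv_smul_smul₀ hww]
  · push Not at h
    refine ⟨0, fun u hu => ?_⟩
    by_cases hu0 : u = 0
    · simp [hu0]
    · exact absurd hu (h u hu0)

lemma exists_real_of_eq_smul_one [Nontrivial H] {B : H →L[ℂ] H} (hB : IsSelfAdjoint B) {c : ℂ}
    (h : B = c • 1) : ∃ r : ℝ, B = (r : ℂ) • 1 := by
  have h1 : star c • (1 : H →L[ℂ] H) = c • 1 := by
    have := hB.star_eq
    rwa [h, star_smul, star_one] at this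
  have h2 : star c = c := smul_left_injective ℂ (one_ne_zero (α := H →L[ℂ] H)) h1
  exact ⟨c.re, by rw [h, Complex.conj_eq_iff_re.1 h2]⟩

/-- A nonnegative operator that anticommutes with `X` also commutes with `X`. -/
lemma QSet_eq_CSet_of_nonneg {B : selfAdjoint (H →L[ℂ] H)} (hB : 0 ≤ (B : H →L[ℂ] H)) :
    QSet {B} = CSet {B} := by
  refine Set.Subset.antisymm (fun X hX => ?_) fun X hX T hT => Or.inl (hX T hT)
  rw [mem_CSet_singleton]
  refine (hX B rfl).elim id fun h => ?_
  have hanti : (X : H →L[ℂ] H) * B = -(B * X) := eq_neg_of_add_eq_zero_left h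
  have hsq : Commute ((B : H →L[ℂ] H) * B) X := by
    rw [commute_iff_eq, ← mul_assoc (X : H →L[ℂ] H), hanti, neg_mul, mul_assoc _ _ (B : H →L[ℂ] H),
      hanti, mul_neg, neg_neg, mul_assoc]
  have h2 := hsq.cfcₙ_nnreal NNReal.sqrt
  change Commute (CFC.sqrt ((B : H →L[ℂ] H) * B)) X at h2
  rw [CFC.sqrt_mul_self _ hB] at h2
  exact h2.symm

lemma sub_mul_sub_eq_zero_of_spectrum_subset {A : H →L[ℂ] H} (hA : IsSelfAdjoint A) {a b : ℝ}
    (h : spectrum ℝ A ⊆ {a, b}) : (A - (a : ℂ) • 1) * (A - (b : ℂ) • 1) = 0 := by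
  have key : ∀ c : ℝ, cfc (fun t : ℝ => t - c) A = A - (c : ℂ) • 1 := fun c => by
    rw [cfc_sub (fun t => t) (fun _ => c) A, cfc_id' ℝ A, cfc_const c A,
      Algebra.algebraMap_eq_smul_one]
    simp
  rw [← key, ← key, ← cfc_mul _ _ A, ← cfc_const_zero ℝ A]
  refine cfc_congr fun t ht => ?_
  rcases h ht with rfl | rfl <;> simp

lemma cfc_ne_zero_of_mem_spectrum {A : H →L[ℂ] H} (hA : IsSelfAdjoint A) {f : ℝ → ℝ}
    (hf : Continuous f) {s : ℝ} (hs : s ∈ spectrum ℝ A) (hfs : f s ≠ 0) : cfc f A ≠ 0 := by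
  intro h0
  have h1 : f s ∈ spectrum ℝ (cfc f A) := by
    rw [cfc_map_spectrum f A]
    exact ⟨s, hs, rfl⟩
  rw [h0] at h1
  have : Nontrivial (H →L[ℂ] H) := by
    by_contra hn
    rw [not_nontrivial_iff_subsingleton] at hn
    rw [spectrum.of_subsingleton] at h1
    exact h1
  rw [spectrum.zero_eq] at h1
  exact hfs h1

/-- Three distinct spectral values give a nonscalar operator with strictly smaller bicommutant. -/
lemma exists_nonscalar_of_three_spectrum {A : selfAdjoint (H →L[ℂ] H)} {p q r : ℝ}
    (hpq : p < q) (hqr : q < r) (hp : p ∈ spectrum ℝ (A : H →L[ℂ] H))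
    (hq : q ∈ spectrum ℝ (A : H →L[ℂ] H)) (hr : r ∈ spectrum ℝ (A : H →L[ℂ] H)) :
    ∃ B : selfAdjoint (H →L[ℂ] H), QSet {B} = CSet {B} ∧
      CSet (CSet {B}) ⊂ CSet (CSet {A}) ∧ ¬ ∃ c : ℝ, (B : H →L[ℂ] H) = (c : ℂ) • 1 := by
  have hA : IsSelfAdjoint (A : H →L[ℂ] H) := A.2
  set m := (p + q) / 2 with hm
  set n := (q + r) / 2 with hn
  set f : ℝ → ℝ := fun t => max 0 (m - t) with hf
  set g : ℝ → ℝ := fun t => max 0 (min (t - m) (n - t)) with hg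
  set k : ℝ → ℝ := fun t => max 0 (t - n) with hk
  have hfc : Continuous f := by fun_prop
  have hgc : Continuous g := by fun_prop
  have hkc : Continuous k := by fun_prop
  have hF0 : cfc f (A : H →L[ℂ] H) ≠ 0 := cfc_ne_zero_of_mem_spectrum hA hfc hp <| by
    have : 0 < m - p := by rw [hm]; linarith
    exact (lt_max_of_lt_right this).ne'
  have hG0 : cfc g (A : H →L[ℂ] H) ≠ 0 := cfc_ne_zero_of_mem_spectrum hA hgc hq <| by
    have : 0 < min (q - m) (n - q) := lt_min (by rw [hm]; linarith) (by rw [hn]; linarith)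
    exact (lt_max_of_lt_right this).ne'
  have hK0 : cfc k (A : H →L[ℂ] H) ≠ 0 := cfc_ne_zero_of_mem_spectrum hA hkc hr <| by
    have : 0 < r - n := by rw [hn]; linarith
    exact (lt_max_of_lt_right this).ne'
  have hmul : ∀ {φ ψ : ℝ → ℝ}, Continuous φ → Continuous ψ → (∀ t, φ t * ψ t = 0) →
      cfc φ (A : H →L[ℂ] H) * cfc ψ (A : H →L[ℂ] H) = 0 := fun {φ ψ} hφ hψ h => by
    rw [← cfc_mul φ ψ _ hφ.continuousOn hψ.continuousOn]
    simp [h]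
  have hmn : m < n := by rw [hm, hn]; linarith
  have hFG : cfc f (A : H →L[ℂ] H) * cfc g (A : H →L[ℂ] H) = 0 := hmul hfc hgc fun t => by
    rcases le_total t m with h | h
    · simp [hg, h]
    · simp [hf, max_eq_left (show m - t ≤ 0 by linarith)]
  have hKF : cfc k (A : H →L[ℂ] H) * cfc f (A : H →L[ℂ] H) = 0 := hmul hkc hfc fun t => by
    rcases le_total t n with h | h
    · simp [hk, max_eq_left (show t - n ≤ 0 by linarith)]
    · simp [hf, max_eq_left (show m - t ≤ 0 by linarith)]
  have hKG : cfc k (A : H →L[ℂ] H) * cfc g (A : H →L[ℂ] H) = 0 := hmul hkc hgc fun t => by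
    rcases le_total t n with h | h
    · simp [hk, max_eq_left (show t - n ≤ 0 by linarith)]
    · simp [hg, h]
  have hFsa : IsSelfAdjoint (cfc f (A : H →L[ℂ] H)) := cfc_predicate f _
  have hKsa : IsSelfAdjoint (cfc k (A : H →L[ℂ] H)) := cfc_predicate k _
  have hKnn : 0 ≤ cfc k (A : H →L[ℂ] H) := cfc_nonneg fun t _ => le_max_left _ _
  refine ⟨⟨cfc k (A : H →L[ℂ] H), hKsa⟩, QSet_eq_CSet_of_nonneg hKnn,
    ⟨fun Y hY X hX => hY X ?_, fun hsub => ?_⟩, ?_⟩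
  · rw [mem_CSet_singleton] at hX ⊢
    exact (hX.symm.cfc_real k).symm
  · obtain ⟨x, hx⟩ := DFunLike.ne_iff.1 hF0
    obtain ⟨y, hy⟩ := DFunLike.ne_iff.1 hG0
    set u := cfc f (A : H →L[ℂ] H) x with hu
    set v := cfc g (A : H →L[ℂ] H) y
    have hKu : cfc k (A : H →L[ℂ] H) u = 0 := congr($hKF x)
    have hKv : cfc k (A : H →L[ℂ] H) v = 0 := congr($hKG y)
    have hFv : cfc f (A : H →L[ℂ] H) v = 0 := congr($hFG y)
    have hA2 : A ∈ CSet (CSet {A}) := fun X hX => (mem_CSet_singleton.1 hX).symm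
    have hKX : Commute (rankOne ℂ (u + v) (u + v)) (cfc k (A : H →L[ℂ] H)) := by
      rw [commute_iff_eq, rankOne_mul_selfAdjoint hKsa, mul_rankOne,
        map_add (cfc k (A : H →L[ℂ] H)), hKu, hKv]
      simp
    have hAX := commute_of_mem_CSet_CSet (hsub hA2) hKX
    have hFX := (hAX.cfc_real f).eq
    rw [rankOne_mul_selfAdjoint hFsa, mul_rankOne,
      map_add (cfc f (A : H →L[ℂ] H)), hFv, add_zero] at hFX
    have hFuv : inner ℂ (cfc f (A : H →L[ℂ] H) u) v = 0 := by
      rw [hFsa.isSymmetric.apply_clm, hFv, inner_zero_right]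
    have h := congr($hFX v)
    have huv : inner ℂ u v = 0 := by
      rw [hu, hFsa.isSymmetric.apply_clm, hFv, inner_zero_right]
    simp only [rankOne_apply, hFuv, zero_smul, inner_add_left, huv, zero_add] at h
    have hFu : cfc f (A : H →L[ℂ] H) u = 0 :=
      (smul_eq_zero.1 h).resolve_left (inner_self_ne_zero.2 hy)
    have huu : inner ℂ u u = 0 := by
      nth_rw 1 [hu]
      rw [hFsa.isSymmetric.apply_clm, hFu, inner_zero_right]
    exact hx (inner_self_eq_zero.1 huu)
  · rintro ⟨c, hc⟩
    change cfc k (A : H →L[ℂ] H) = (c : ℂ) • 1 at hc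
    rw [hc, smul_mul_assoc, one_mul] at hKF
    rw [(smul_eq_zero.1 hKF).resolve_right hF0, zero_smul] at hc
    exact hK0 hc

lemma exists_spectrum_pair {A : H →L[ℂ] H} [Nontrivial H] (hA : IsSelfAdjoint A)
    (hns : ¬ ∃ r : ℝ, A = (r : ℂ) • 1) :
    ∃ p ∈ spectrum ℝ A, ∃ q ∈ spectrum ℝ A, p < q := by
  obtain ⟨p, hp⟩ : (spectrum ℝ A).Nonempty := ContinuousFunctionalCalculus.spectrum_nonempty A hA
  by_contra! hcon
  refine hns ⟨p, ?_⟩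
  have h : ∀ t ∈ spectrum ℝ A, t = p := fun t ht => le_antisymm (hcon p hp t ht) (hcon t ht p hp)
  rw [← cfc_id' ℝ A, cfc_congr (g := fun _ => p) h, cfc_const p A, Algebra.algebraMap_eq_smul_one]
  simp

omit [CompleteSpace H] in
lemma map_sub_smul_one_apply {A : H →L[ℂ] H} {a b : ℝ}
    (h : (A - (a : ℂ) • 1) * (A - (b : ℂ) • 1) = 0) (x : H) :
    A ((A - (b : ℂ) • 1) x) = (a : ℂ) • (A - (b : ℂ) • 1) x := by
  have h1 := congr($h x)
  rw [mul_apply_eq_comp, sub_apply] at h1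
  exact sub_eq_zero.1 h1

lemma coe_image_spectrum {A : H →L[ℂ] H} (hA : IsSelfAdjoint A) :
    spectrum ℂ A = (fun t : ℝ => (t : ℂ)) '' spectrum ℝ A :=
  hA.spectrumRestricts.algebraMap_image.symm

lemma isScalar_of_CSet_CSet_ssubset [Nontrivial H] {A B : selfAdjoint (H →L[ℂ] H)} {a b : ℝ}
    (hab : a ≠ b) (hspec : spectrum ℝ (A : H →L[ℂ] H) ⊆ {a, b})
    (hBA : CSet (CSet {B}) ⊂ CSet (CSet {A})) : ∃ r : ℝ, (B : H →L[ℂ] H) = (r : ℂ) • 1 := by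
  have hB : B ∈ CSet (CSet {A}) := hBA.1 fun X hX => (mem_CSet_singleton.1 hX).symm
  have hab' : (a : ℂ) - b ≠ 0 := sub_ne_zero.2 (by exact_mod_cast hab)
  obtain ⟨c, hc⟩ := exists_smul_of_mem_CSet_CSet hB a
  obtain ⟨d, hd⟩ := exists_smul_of_mem_CSet_CSet hB b
  have h1 := map_sub_smul_one_apply (sub_mul_sub_eq_zero_of_spectrum_subset A.2 hspec)
  have h2 := map_sub_smul_one_apply
    (sub_mul_sub_eq_zero_of_spectrum_subset A.2 (hspec.trans (Set.pair_comm a b).subset))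
  have hlin : ((a : ℂ) - b) • (B : H →L[ℂ] H) =
      (c - d) • (A : H →L[ℂ] H) + (d * a - c * b) • 1 := by
    ext x
    have e1 := hc _ (h1 x)
    have e2 := hd _ (h2 x)
    simp only [sub_apply, smul_apply,
      one_apply_eq_self, add_apply, map_sub, map_smul] at e1 e2 ⊢
    linear_combination (norm := module) e1 - e2
  by_cases hcd : c = d
  · refine exists_real_of_eq_smul_one B.2 (c := c) ?_
    subst hcd
    rw [sub_self, zero_smul, zero_add, ← mul_sub, mul_comm, mul_smul] at hlin
    exact smul_right_injective _ hab' hlin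
  · refine absurd (fun Y hY X hX => hY X ?_) hBA.2
    rw [mem_CSet_singleton] at hX ⊢
    have h3 : Commute (X : H →L[ℂ] H) ((c - d) • (A : H →L[ℂ] H)) := by
      rw [eq_sub_of_add_eq hlin.symm]
      exact (hX.smul_right _).sub_right ((Commute.one_right _).smul_right _)
    have h4 := h3.smul_right (c - d)⁻¹
    rwa [inv_smul_smul₀ (sub_ne_zero.2 hcd)] at h4

/-- A self-adjoint operator whose spectrum is `{a, -a}` anticommutes with some operator that it
does not commute with. -/
lemma QSet_ne_CSet_of_spectrum_neg {A : selfAdjoint (H →L[ℂ] H)}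
    (hns : ¬ ∃ r : ℝ, (A : H →L[ℂ] H) = (r : ℂ) • 1) {a : ℝ} (ha : a ≠ 0)
    (hspec : spectrum ℝ (A : H →L[ℂ] H) ⊆ {a, -a}) : QSet {A} ≠ CSet {A} := by
  intro hQ
  have hex : ∀ b : ℝ, ∃ x, ((A : H →L[ℂ] H) - (b : ℂ) • 1) x ≠ 0 := fun b =>
    DFunLike.ne_iff.1 (sub_ne_zero.2 fun h => hns ⟨b, h⟩)
  obtain ⟨x, hx⟩ := hex (-a)
  obtain ⟨y, hy⟩ := hex a
  have hu := map_sub_smul_one_apply (sub_mul_sub_eq_zero_of_spectrum_subset A.2 hspec) x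
  have hv := map_sub_smul_one_apply
    (sub_mul_sub_eq_zero_of_spectrum_subset A.2 (hspec.trans (Set.pair_comm a (-a)).subset)) y
  set u := ((A : H →L[ℂ] H) - ((-a : ℝ) : ℂ) • 1) x
  set v := ((A : H →L[ℂ] H) - (a : ℂ) • 1) y
  have ha' : (a : ℂ) ≠ 0 := by exact_mod_cast ha
  have hX : IsSelfAdjoint (rankOne ℂ u v + rankOne ℂ v u) := by
    rw [ContinuousLinearMap.isSelfAdjoint_iff', map_add, adjoint_rankOne, adjoint_rankOne,
      add_comm]
  have hXA : (rankOne ℂ u v + rankOne ℂ v u) * (A : H →L[ℂ] H) =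
      (a : ℂ) • (rankOne ℂ v u - rankOne ℂ u v) := by
    rw [add_mul, rankOne_mul_selfAdjoint A.2, rankOne_mul_selfAdjoint A.2, hu, hv,
      rankOne_ofReal_smul_right, rankOne_ofReal_smul_right, Complex.ofReal_neg]
    module
  have hAX : (A : H →L[ℂ] H) * (rankOne ℂ u v + rankOne ℂ v u) =
      (a : ℂ) • (rankOne ℂ u v - rankOne ℂ v u) := by
    rw [mul_add, mul_rankOne, mul_rankOne, hu, hv, map_smul, map_smul,
      smul_apply, smul_apply, Complex.ofReal_neg]
    module
  have hmem : (⟨_, hX⟩ : selfAdjoint (H →L[ℂ] H)) ∈ QSet {A} := by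
    rintro T rfl
    refine Or.inr ?_
    change (rankOne ℂ u v + rankOne ℂ v u) * (T : H →L[ℂ] H) +
      (T : H →L[ℂ] H) * (rankOne ℂ u v + rankOne ℂ v u) = 0
    rw [hXA, hAX, ← smul_add]
    simp
  rw [hQ, mem_CSet_singleton, commute_iff_eq] at hmem
  change (rankOne ℂ u v + rankOne ℂ v u) * (A : H →L[ℂ] H) =
      (A : H →L[ℂ] H) * (rankOne ℂ u v + rankOne ℂ v u) at hmem
  rw [hXA, hAX] at hmem
  have heq := smul_right_injective _ ha' hmem
  have huv : inner ℂ u v = 0 := by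
    have h := A.2.isSymmetric.apply_clm u v
    rw [hu, hv] at h
    simp only [inner_smul_left, inner_smul_right, Complex.conj_ofReal, Complex.ofReal_neg] at h
    have h2 : (2 * (a : ℂ)) * inner ℂ u v = 0 := by linear_combination h
    exact (mul_eq_zero.1 h2).resolve_left (mul_ne_zero two_ne_zero ha')
  have h := congr($heq v)
  simp only [sub_apply, rankOne_apply, huv, zero_smul, zero_sub, sub_zero] at h
  have h2 : ((2 : ℂ) * inner ℂ v v) • u = 0 := by
    rw [mul_smul, two_smul]
    nth_rw 1 [← h]
    simp
  rcases smul_eq_zero.1 h2 with h3 | h3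
  · exact hy (inner_self_eq_zero.1 ((mul_eq_zero.1 h3).resolve_left two_ne_zero))
  · exact hx h3

end QuasiCommutant

theorem stmt9
    (hdim : 3 ≤ Module.rank ℂ H)
    (A : selfAdjoint (H →L[ℂ] H))
    (hA : ¬ ∃ r : ℝ, (A : H →L[ℂ] H) = (r : ℂ) • 1)
    (hAq : QSet {A} = CSet {A}) :
    (∃ a b : ℂ, a ≠ b ∧ a + b ≠ 0 ∧ spectrum ℂ (A : H →L[ℂ] H) = {a, b}) ↔
      (∀ B : selfAdjoint (H →L[ℂ] H), QSet {B} = CSet {B} →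
        QSet (QSet {B}) ⊂ QSet (QSet {A}) →
        ∃ r : ℝ, (B : H →L[ℂ] H) = (r : ℂ) • 1) := by
  have : Nontrivial H := by
    rw [← rank_pos_iff_nontrivial (R := ℂ)]
    exact lt_of_lt_of_le (by norm_num) hdim
  rw [coe_image_spectrum A.2, QSet_QSet_of_QSet_eq_CSet hAq]
  constructor
  · rintro ⟨a, b, hab, -, hspec⟩ B hBq hBA
    rw [QSet_QSet_of_QSet_eq_CSet hBq] at hBA
    obtain ⟨a, -, rfl⟩ : a ∈ (fun t : ℝ => (t : ℂ)) '' spectrum ℝ (A : H →L[ℂ] H) := by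
      simp [hspec]
    obtain ⟨b, -, rfl⟩ : b ∈ (fun t : ℝ => (t : ℂ)) '' spectrum ℝ (A : H →L[ℂ] H) := by
      simp [hspec]
    refine isScalar_of_CSet_CSet_ssubset (a := a) (b := b) (by rintro rfl; exact hab rfl) ?_ hBA
    intro t ht
    have h := hspec.subset ⟨t, ht, rfl⟩
    simpa using h
  · intro hmin
    obtain ⟨p, hp, q, hq, hpq⟩ := exists_spectrum_pair A.2 hA
    have hno : ∀ {x y z : ℝ}, x < y → y < z → x ∈ spectrum ℝ (A : H →L[ℂ] H) →
        y ∈ spectrum ℝ (A : H →L[ℂ] H) → z ∈ spectrum ℝ (A : H →L[ℂ] H) → False := by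
      intro x y z hxy hyz hx hy hz
      obtain ⟨B, hBq, hBA, hBns⟩ := exists_nonscalar_of_three_spectrum hxy hyz hx hy hz
      exact hBns (hmin B hBq (by rwa [QSet_QSet_of_QSet_eq_CSet hBq]))
    have hspec : spectrum ℝ (A : H →L[ℂ] H) = {p, q} := by
      refine Set.Subset.antisymm (fun t ht => ?_) (by rintro t (rfl | rfl) <;> assumption)
      rcases lt_trichotomy t p with h | h | h
      · exact (hno h hpq ht hp hq).elim
      · exact Or.inl h
      · rcases lt_trichotomy t q with h' | h' | h'
        · exact (hno h h' hp ht hq).elim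
        · exact Or.inr h'
        · exact (hno hpq h' hp hq ht).elim
    refine ⟨p, q, by exact_mod_cast hpq.ne, fun hsum => ?_, by rw [hspec, Set.image_pair]⟩
    obtain rfl : q = -p := eq_neg_of_add_eq_zero_right (by exact_mod_cast hsum)
    exact QSet_ne_CSet_of_spectrum_neg hA (by rintro rfl; simp at hpq) hspec.subset hAq
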